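/- For every well-formed formula Q and all well-formed formulas A, B of the implicational propositional calculus, the formula QQB ⊃ QQ(A ⊃ B) is a theorem of IPC. -/

import Mathlib

/-- Well-formed formulas of the implicational propositional calculus:
propositional variables (indexed by ℕ, so the set of wfs is countable)
and the single connective ⊃. -/
inductive Wf where
  | var : ℕ → Wf
  | imp : Wf → Wf → Wf
deriving DecidableEq

infixr:60 " ⊃' " => Wf.imp

/-- `Deduces Γ A` : `A` is deducible from the set `Γ` of extra axioms/hypotheses,
using the three axiom schemes of IPC (including the Peirce scheme) and modus ponens.
Theorems of IPC are `Deduces ∅ A`; for an extension `M` of IPC with extra-axiom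
set `E`, `T(M)` is `Deduces E`, and deducibility from hypotheses `Γ` in `M` is
`Deduces (E ∪ Γ)`. -/
inductive Deduces : Set Wf → Wf → Prop where
  | hyp : ∀ {Γ : Set Wf} {A : Wf}, A ∈ Γ → Deduces Γ A
  | ax1 : ∀ {Γ : Set Wf} (A B : Wf), Deduces Γ (A ⊃' (B ⊃' A))
  | ax2 : ∀ {Γ : Set Wf} (A B C : Wf),
      Deduces Γ ((A ⊃' (B ⊃' C)) ⊃' ((A ⊃' B) ⊃' (A ⊃' C)))
  | peirce : ∀ {Γ : Set Wf} (A B : Wf), Deduces Γ (((A ⊃' B) ⊃' A) ⊃' A)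
  | mp : ∀ {Γ : Set Wf} {A B : Wf}, Deduces Γ (A ⊃' B) → Deduces Γ A → Deduces Γ B

namespace Deduces

variable {Γ : Set Wf} {A B C : Wf}

theorem imp_of_right (A : Wf) (h : Deduces Γ B) : Deduces Γ (A ⊃' B) :=
  .mp (.ax1 B A) h

theorem imp_mp (hBC : Deduces Γ (A ⊃' (B ⊃' C))) (hB : Deduces Γ (A ⊃' B)) :
    Deduces Γ (A ⊃' C) :=
  .mp (.mp (.ax2 A B C) hBC) hB

theorem imp_comp (A B C : Wf) : Deduces Γ ((B ⊃' C) ⊃' ((A ⊃' B) ⊃' (A ⊃' C))) :=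
  imp_mp (imp_of_right (B ⊃' C) (.ax2 A B C)) (.ax1 (B ⊃' C) A)

theorem imp_antitone_left (h : Deduces Γ (A ⊃' B)) (C : Wf) :
    Deduces Γ ((B ⊃' C) ⊃' (A ⊃' C)) :=
  imp_mp (imp_comp A B C) (imp_of_right (B ⊃' C) h)

theorem imp_imp_monotone_left (h : Deduces Γ (A ⊃' B)) (Q : Wf) :
    Deduces Γ (((A ⊃' Q) ⊃' Q) ⊃' ((B ⊃' Q) ⊃' Q)) :=
  (h.imp_antitone_left Q).imp_antitone_left Q

end Deduces

/-- Theorem 1(5): QQB ⊃ QQ(A ⊃ B) is a theorem of IPC. -/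
theorem stmt_4 (Q A B : Wf) :
    Deduces ∅ (((B ⊃' Q) ⊃' Q) ⊃' (((A ⊃' B) ⊃' Q) ⊃' Q)) :=
  (Deduces.ax1 B A).imp_imp_monotone_left Q
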